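/- arXiv:2508.04112 — 4 statements merged into one kernel-verified Lean document; each statement's English description precedes it below -/
import Mathlib

section
/- Let τ > 0 and a ∈ ℝ. The real 3×3 matrix A = ![![a, 0, 1], ![0, τ, 0], ![1/τ, 0, 0]] has characteristic polynomial (τ − λ)(λ² − aλ − 1/τ); consequently its eigenvalues are exactly the three real numbers τ, (a + √(a² + 4/τ))/2 and (a − √(a² + 4/τ))/2. In particular all eigenvalues of A are real. -/
open Polynomial

/-- The flux Jacobian of the hyperbolic approximation of the generalized
Benjamin–Bona–Mahony equation has characteristic polynomial
`(X - τ)(X² - aX - 1/τ)` (i.e. `det(A - λI) = (τ - λ)(λ² - aλ - 1/τ)`),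
and its eigenvalues are exactly the three real numbers
`τ`, `(a + √(a² + 4/τ))/2` and `(a - √(a² + 4/τ))/2`. -/
theorem bbm_hyperbolic_charpoly_and_spectrum (τ a : ℝ) (hτ : 0 < τ)
    (A : Matrix (Fin 3) (Fin 3) ℝ)
    (hA : A = !![a, 0, 1; 0, τ, 0; 1/τ, 0, 0]) :
    A.charpoly = (X - C τ) * (X ^ 2 - C a * X - C (1 / τ)) ∧
      spectrum ℝ A = {τ, (a + Real.sqrt (a ^ 2 + 4 / τ)) / 2,
        (a - Real.sqrt (a ^ 2 + 4 / τ)) / 2} := by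
  have hchar : A.charpoly = (X - C τ) * (X ^ 2 - C a * X - C (1 / τ)) := by
    subst hA
    rw [Matrix.charpoly, Matrix.det_fin_three]
    simp
    ring
  refine ⟨hchar, Set.ext fun μ => ?_⟩
  have hs : Real.sqrt (a ^ 2 + 4 / τ) ^ 2 = a ^ 2 + 4 / τ := Real.sq_sqrt (by positivity)
  set s := Real.sqrt (a ^ 2 + 4 / τ)
  have hfactor : μ ^ 2 - a * μ - 1 / τ = (μ - (a + s) / 2) * (μ - (a - s) / 2) := by
    linear_combination hs / 4
  rw [Matrix.mem_spectrum_iff_isRoot_charpoly, hchar]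
  simp only [IsRoot.def, eval_mul, eval_sub, eval_pow, eval_X, eval_C, hfactor,
    mul_eq_zero, sub_eq_zero, Set.mem_insert_iff, Set.mem_singleton_iff]
end

section
/- Let L, T, τ > 0 and let f : ℝ → ℝ be continuously differentiable. Let q₀, q₁, q₂ : [0,T] × ℝ → ℝ be continuously differentiable and L-periodic in the second variable, satisfying ∂_t q₀ + ∂_x f(q₀) + ∂_x q₂ = 0, ∂_t q₁ + τ ∂_x q₁ = −q₂ and τ ∂_t q₂ + ∂_x q₀ = q₁ on [0,T] × ℝ. Then the energy t ↦ η(q)(t) = ∫₀^L (½ q₀(t,x)² + ½ q₁(t,x)² + (τ/2) q₂(t,x)²) dx is constant on [0,T]. -/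
open MeasureTheory

/-- Partial derivative with respect to the first (time) variable. -/
noncomputable def pdt (u : ℝ → ℝ → ℝ) : ℝ → ℝ → ℝ :=
  fun t x => deriv (fun s => u s x) t

/-- Partial derivative with respect to the second (space) variable. -/
noncomputable def pdx (u : ℝ → ℝ → ℝ) : ℝ → ℝ → ℝ :=
  fun t x => deriv (fun y => u t y) x

theorem hasDerivAt_pdt {u : ℝ → ℝ → ℝ} (hu : ContDiff ℝ 1 (Function.uncurry u)) (t x : ℝ) :
    HasDerivAt (fun s => u s x) (pdt u t x) t := by
  have h : Differentiable ℝ (fun s => Function.uncurry u (s, x)) :=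
    (hu.differentiable one_ne_zero).comp (by fun_prop)
  exact (h t).hasDerivAt

theorem hasDerivAt_pdx {u : ℝ → ℝ → ℝ} (hu : ContDiff ℝ 1 (Function.uncurry u)) (t x : ℝ) :
    HasDerivAt (fun y => u t y) (pdx u t x) x := by
  have h : Differentiable ℝ (fun y => Function.uncurry u (t, y)) :=
    (hu.differentiable one_ne_zero).comp (by fun_prop)
  exact (h x).hasDerivAt

theorem continuous_pdt {u : ℝ → ℝ → ℝ} (hu : ContDiff ℝ 1 (Function.uncurry u)) :
    Continuous (Function.uncurry (pdt u)) := by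
  have h : Function.uncurry (pdt u) = fun p => fderiv ℝ (Function.uncurry u) p (1, 0) := by
    ext ⟨t, x⟩
    have h₁ := (hu.differentiable one_ne_zero (t, x)).hasFDerivAt
    have h₂ : HasDerivAt (fun s : ℝ => (s, x)) ((1 : ℝ), (0 : ℝ)) t :=
      (hasDerivAt_id t).prodMk (hasDerivAt_const t x)
    have h₃ := h₁.comp_hasDerivAt t h₂
    exact (hasDerivAt_pdt hu t x).unique h₃
  rw [h]
  exact (hu.continuous_fderiv one_ne_zero).clm_apply continuous_const

/-- Differentiation under the integral sign for a `C¹` integrand on a bounded interval. -/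
theorem hasDerivAt_intervalIntegral_pdt {u : ℝ → ℝ → ℝ}
    (hu : ContDiff ℝ 1 (Function.uncurry u)) (a b t : ℝ) :
    HasDerivAt (fun s => ∫ x in a..b, u s x) (∫ x in a..b, pdt u t x) t := by
  have hc (s : ℝ) : Continuous (u s) := hu.continuous.comp (by fun_prop : Continuous (s, ·))
  have hc' (s : ℝ) : Continuous (pdt u s) :=
    (continuous_pdt hu).comp (by fun_prop : Continuous (s, ·))
  obtain ⟨C, hC⟩ := ((isCompact_closedBall t 1).prod
    (isCompact_uIcc (a := a) (b := b))).exists_bound_of_continuousOn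
      (continuous_pdt hu).continuousOn
  refine (intervalIntegral.hasDerivAt_integral_of_dominated_loc_of_deriv_le
    (F' := pdt u) (bound := fun _ => C) (Metric.closedBall_mem_nhds t one_pos)
    (.of_forall fun s => (hc s).aestronglyMeasurable) ((hc t).intervalIntegrable a b)
    (hc' t).aestronglyMeasurable ?_ intervalIntegrable_const ?_).2
  · exact .of_forall fun x hx s hs => hC (s, x) ⟨hs, Set.uIoc_subset_uIcc hx⟩
  · exact .of_forall fun x _ s _ => hasDerivAt_pdt hu s x

/-- Energy conservation for the hyperbolic approximation of the generalized
Benjamin–Bona–Mahony equation. -/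
theorem bbm_hyperbolic_energy_conservation
    (L T τ : ℝ) (hL : 0 < L) (hT : 0 < T) (hτ : 0 < τ)
    (f : ℝ → ℝ) (hf : ContDiff ℝ 1 f)
    (q₀ q₁ q₂ : ℝ → ℝ → ℝ)
    (hq₀ : ContDiff ℝ 1 (Function.uncurry q₀))
    (hq₁ : ContDiff ℝ 1 (Function.uncurry q₁))
    (hq₂ : ContDiff ℝ 1 (Function.uncurry q₂))
    (hper₀ : ∀ t, Function.Periodic (q₀ t) L)
    (hper₁ : ∀ t, Function.Periodic (q₁ t) L)
    (hper₂ : ∀ t, Function.Periodic (q₂ t) L)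
    (heq₀ : ∀ t ∈ Set.Icc (0:ℝ) T, ∀ x : ℝ,
      pdt q₀ t x + pdx (fun s y => f (q₀ s y)) t x + pdx q₂ t x = 0)
    (heq₁ : ∀ t ∈ Set.Icc (0:ℝ) T, ∀ x : ℝ,
      pdt q₁ t x + τ * pdx q₁ t x = - q₂ t x)
    (heq₂ : ∀ t ∈ Set.Icc (0:ℝ) T, ∀ x : ℝ,
      τ * pdt q₂ t x + pdx q₀ t x = q₁ t x) :
    ∀ t ∈ Set.Icc (0:ℝ) T,
      (∫ x in (0:ℝ)..L, (q₀ t x ^ 2 / 2 + q₁ t x ^ 2 / 2 + τ / 2 * q₂ t x ^ 2))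
        = ∫ x in (0:ℝ)..L, (q₀ 0 x ^ 2 / 2 + q₁ 0 x ^ 2 / 2 + τ / 2 * q₂ 0 x ^ 2) := by
  set e : ℝ → ℝ → ℝ := fun t x => q₀ t x ^ 2 / 2 + q₁ t x ^ 2 / 2 + τ / 2 * q₂ t x ^ 2
  have hec : ContDiff ℝ 1 (Function.uncurry e) :=
    (((hq₀.pow 2).div_const 2).add ((hq₁.pow 2).div_const 2)).add (contDiff_const.mul (hq₂.pow 2))
  have hfq : ContDiff ℝ 1 (Function.uncurry fun s y => f (q₀ s y)) := hf.comp hq₀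
  -- The energy flux, whose spatial derivative balances the time derivative of the density `e`.
  set G : ℝ → ℝ → ℝ := fun t x => q₀ t x * f (q₀ t x) - (∫ v in (0:ℝ)..q₀ t x, f v)
    + q₀ t x * q₂ t x + τ / 2 * q₁ t x ^ 2 with hG
  have hflux : ∀ t ∈ Set.Icc (0:ℝ) T, ∀ x, HasDerivAt (G t) (-pdt e t x) x := by
    intro t ht x
    have het : pdt e t x = q₀ t x * pdt q₀ t x + q₁ t x * pdt q₁ t x
        + τ * (q₂ t x * pdt q₂ t x) := by
      refine (hasDerivAt_pdt hec t x).unique ?_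
      refine (((((hasDerivAt_pdt hq₀ t x).pow 2).div_const 2).add
        (((hasDerivAt_pdt hq₁ t x).pow 2).div_const 2)).add
        (((hasDerivAt_pdt hq₂ t x).pow 2).const_mul (τ / 2))).congr_deriv ?_
      push_cast
      ring
    have hF := (hf.continuous.integral_hasStrictDerivAt 0 (q₀ t x)).hasDerivAt.comp x
      (hasDerivAt_pdx hq₀ t x)
    refine (((((hasDerivAt_pdx hq₀ t x).mul (hasDerivAt_pdx hfq t x)).sub hF).add
      ((hasDerivAt_pdx hq₀ t x).mul (hasDerivAt_pdx hq₂ t x))).add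
      (((hasDerivAt_pdx hq₁ t x).pow 2).const_mul (τ / 2))).congr_deriv ?_
    rw [het]
    push_cast
    linear_combination q₀ t x * heq₀ t ht x + q₁ t x * heq₁ t ht x + q₂ t x * heq₂ t ht x
  have hzero : ∀ t ∈ Set.Icc (0:ℝ) T, ∫ x in (0:ℝ)..L, pdt e t x = 0 := by
    intro t ht
    have hc : Continuous (pdt e t) :=
      (continuous_pdt hec).comp (by fun_prop : Continuous (t, ·))
    have hint := intervalIntegral.integral_eq_sub_of_hasDerivAt
      (fun x _ => hflux t ht x) (hc.neg.intervalIntegrable 0 L)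
    have hGper : G t L = G t 0 := by
      simp only [hG, (hper₀ t).eq, (hper₁ t).eq, (hper₂ t).eq]
    rw [intervalIntegral.integral_neg, hGper, sub_self, neg_eq_zero] at hint
    exact hint
  have hderiv (t : ℝ) := hasDerivAt_intervalIntegral_pdt hec 0 L t
  exact constant_of_has_deriv_right_zero
    (fun t _ => (hderiv t).continuousAt.continuousWithinAt)
    (fun t ht => ((hderiv t).congr_deriv
      (hzero t (Set.Ico_subset_Icc_self ht))).hasDerivWithinAt)
end

section
/- Let L, T, τ > 0, let f : ℝ → ℝ be continuously differentiable, and let u : [0,T] × ℝ → ℝ be smooth (C⁵ suffices), L-periodic in x, and satisfy ∂_t u + ∂_x f(u) − ∂_x² ∂_t u = 0 on [0,T] × ℝ. Define q̄₀ = u, q̄₁ = ∂_x u − τ ∂_t² ∂_x u, q̄₂ = −∂_t ∂_x u and R = −∂_t³ ∂_x u + ∂_x² u − τ ∂_t² ∂_x² u. Then on [0,T] × ℝ one has exactly ∂_t q̄₀ + ∂_x f(q̄₀) + ∂_x q̄₂ = 0, τ ∂_t q̄₂ + ∂_x q̄₀ = q̄₁, and ∂_t q̄₁ + τ ∂_x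 q̄₁ = −q̄₂ + τ R; i.e. the triple (q̄₀, q̄₁, q̄₂) solves the hyperbolic approximation with a residual τR appearing only in the second equation. -/
open MeasureTheory

theorem pdt_eq_fderiv {v : ℝ → ℝ → ℝ} (hv : Differentiable ℝ (Function.uncurry v)) (t x : ℝ) :
    pdt v t x = fderiv ℝ (Function.uncurry v) (t, x) (1, 0) :=
  ((hv (t, x)).hasFDerivAt.comp_hasDerivAt (f := fun s => (s, x)) t
    ((hasDerivAt_id t).prodMk (hasDerivAt_const t x))).deriv

theorem pdx_eq_fderiv {v : ℝ → ℝ → ℝ} (hv : Differentiable ℝ (Function.uncurry v)) (t x : ℝ) :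
    pdx v t x = fderiv ℝ (Function.uncurry v) (t, x) (0, 1) :=
  ((hv (t, x)).hasFDerivAt.comp_hasDerivAt (f := fun y => (t, y)) x
    ((hasDerivAt_const x t).prodMk (hasDerivAt_id x))).deriv

theorem uncurry_pdt {v : ℝ → ℝ → ℝ} (hv : Differentiable ℝ (Function.uncurry v)) :
    Function.uncurry (pdt v) = fun p => fderiv ℝ (Function.uncurry v) p (1, 0) :=
  funext fun p => pdt_eq_fderiv hv p.1 p.2

theorem uncurry_pdx {v : ℝ → ℝ → ℝ} (hv : Differentiable ℝ (Function.uncurry v)) :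
    Function.uncurry (pdx v) = fun p => fderiv ℝ (Function.uncurry v) p (0, 1) :=
  funext fun p => pdx_eq_fderiv hv p.1 p.2

theorem contDiff_pdt {v : ℝ → ℝ → ℝ} {m n : WithTop ℕ∞} (hv : ContDiff ℝ n (Function.uncurry v))
    (hmn : m + 1 ≤ n) : ContDiff ℝ m (Function.uncurry (pdt v)) := by
  rw [uncurry_pdt ((hv.of_le (le_add_self.trans hmn)).differentiable one_ne_zero)]
  exact (hv.fderiv_right hmn).clm_apply contDiff_const

theorem contDiff_pdx {v : ℝ → ℝ → ℝ} {m n : WithTop ℕ∞} (hv : ContDiff ℝ n (Function.uncurry v))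
    (hmn : m + 1 ≤ n) : ContDiff ℝ m (Function.uncurry (pdx v)) := by
  rw [uncurry_pdx ((hv.of_le (le_add_self.trans hmn)).differentiable one_ne_zero)]
  exact (hv.fderiv_right hmn).clm_apply contDiff_const

/-- Equality of mixed partial derivatives. -/
theorem pdx_pdt_comm {v : ℝ → ℝ → ℝ} (hv : ContDiff ℝ 2 (Function.uncurry v)) :
    pdx (pdt v) = pdt (pdx v) := by
  have h12 : (1 : WithTop ℕ∞) + 1 ≤ 2 := by norm_num
  have hd : Differentiable ℝ (Function.uncurry v) := hv.differentiable two_ne_zero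
  have hdd : Differentiable ℝ (fderiv ℝ (Function.uncurry v)) :=
    (hv.fderiv_right h12).differentiable one_ne_zero
  funext t x
  rw [pdx_eq_fderiv ((contDiff_pdt hv h12).differentiable one_ne_zero),
    pdt_eq_fderiv ((contDiff_pdx hv h12).differentiable one_ne_zero),
    uncurry_pdt hd, uncurry_pdx hd,
    fderiv_clm_apply (hdd _) (differentiableAt_const _),
    fderiv_clm_apply (hdd _) (differentiableAt_const _)]
  simpa using (hv.contDiffAt.isSymmSndFDerivAt (by simp)) (0, 1) (1, 0)

theorem differentiable_slice_fst {v : ℝ → ℝ → ℝ} (hv : ContDiff ℝ 1 (Function.uncurry v)) (x : ℝ) :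
    Differentiable ℝ fun s => v s x :=
  (hv.differentiable one_ne_zero).comp (differentiable_id.prodMk (differentiable_const x))

theorem differentiable_slice_snd {v : ℝ → ℝ → ℝ} (hv : ContDiff ℝ 1 (Function.uncurry v)) (t : ℝ) :
    Differentiable ℝ fun y => v t y :=
  (hv.differentiable one_ne_zero).comp ((differentiable_const t).prodMk differentiable_id)

theorem pdt_neg (v : ℝ → ℝ → ℝ) (t x : ℝ) : pdt (fun s y => -v s y) t x = -pdt v t x :=
  deriv.fun_neg

theorem pdx_neg (v : ℝ → ℝ → ℝ) (t x : ℝ) : pdx (fun s y => -v s y) t x = -pdx v t x :=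
  deriv.fun_neg

theorem pdt_sub_const_mul {v w : ℝ → ℝ → ℝ} (hv : ContDiff ℝ 1 (Function.uncurry v))
    (hw : ContDiff ℝ 1 (Function.uncurry w)) (c t x : ℝ) :
    pdt (fun s y => v s y - c * w s y) t x = pdt v t x - c * pdt w t x :=
  ((differentiable_slice_fst hv x t).hasDerivAt.sub
    ((differentiable_slice_fst hw x t).hasDerivAt.const_mul c)).deriv

theorem pdx_sub_const_mul {v w : ℝ → ℝ → ℝ} (hv : ContDiff ℝ 1 (Function.uncurry v))
    (hw : ContDiff ℝ 1 (Function.uncurry w)) (c t x : ℝ) :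
    pdx (fun s y => v s y - c * w s y) t x = pdx v t x - c * pdx w t x :=
  ((differentiable_slice_snd hv t x).hasDerivAt.sub
    ((differentiable_slice_snd hw t x).hasDerivAt.const_mul c)).deriv

/-- Given a smooth solution `u` of the generalized BBM equation
`∂_t u + ∂_x f(u) - ∂_x² ∂_t u = 0`, the triple
`q̄₀ = u`, `q̄₁ = ∂_x u - τ ∂_t² ∂_x u`, `q̄₂ = -∂_t ∂_x u`
solves the hyperbolic approximation exactly, except for a residual `τ R`
(with `R = -∂_t³ ∂_x u + ∂_x² u - τ ∂_t² ∂_x² u`) in the second equation. -/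
theorem bbm_approximate_solution_residual
    (L T τ : ℝ) (hL : 0 < L) (hT : 0 < T) (hτ : 0 < τ)
    (f : ℝ → ℝ) (hf : ContDiff ℝ 1 f)
    (u : ℝ → ℝ → ℝ) (hu : ContDiff ℝ 5 (Function.uncurry u))
    (huper : ∀ t, Function.Periodic (u t) L)
    (hueq : ∀ t ∈ Set.Icc (0:ℝ) T, ∀ x : ℝ,
      pdt u t x + pdx (fun s y => f (u s y)) t x - pdx (pdx (pdt u)) t x = 0) :
    let qb₀ : ℝ → ℝ → ℝ := u
    let qb₁ : ℝ → ℝ → ℝ := fun t x => pdx u t x - τ * pdt (pdt (pdx u)) t x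
    let qb₂ : ℝ → ℝ → ℝ := fun t x => - pdt (pdx u) t x
    let R : ℝ → ℝ → ℝ := fun t x =>
      - pdt (pdt (pdt (pdx u))) t x + pdx (pdx u) t x
        - τ * pdt (pdt (pdx (pdx u))) t x
    ∀ t ∈ Set.Icc (0:ℝ) T, ∀ x : ℝ,
      (pdt qb₀ t x + pdx (fun s y => f (qb₀ s y)) t x + pdx qb₂ t x = 0) ∧
      (τ * pdt qb₂ t x + pdx qb₀ t x = qb₁ t x) ∧
      (pdt qb₁ t x + τ * pdx qb₁ t x = - qb₂ t x + τ * R t x) := by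
  intro qb₀ qb₁ qb₂ R t ht x
  have hux : ContDiff ℝ 4 (Function.uncurry (pdx u)) := contDiff_pdx hu (by norm_num)
  have huxt : ContDiff ℝ 3 (Function.uncurry (pdt (pdx u))) := contDiff_pdt hux (by norm_num)
  have huxtt : ContDiff ℝ 2 (Function.uncurry (pdt (pdt (pdx u)))) :=
    contDiff_pdt huxt (by norm_num)
  have hux1 := hux.of_le (m := 1) (by norm_num)
  have huxtt1 := huxtt.of_le (m := 1) (by norm_num)
  have hxt : pdx (pdt u) = pdt (pdx u) := pdx_pdt_comm (hu.of_le (by norm_num))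
  have hxtt : pdx (pdt (pdt (pdx u))) = pdt (pdt (pdx (pdx u))) := by
    rw [pdx_pdt_comm (huxt.of_le (by norm_num)), pdx_pdt_comm (hux.of_le (by norm_num))]
  refine ⟨?_, ?_, ?_⟩
  · have h := hueq t ht x
    rw [hxt] at h
    simp only [qb₀, qb₂, pdx_neg]
    linarith
  · simp only [qb₀, qb₁, qb₂, pdt_neg]
    ring
  · simp only [qb₁, qb₂, R]
    rw [pdt_sub_const_mul hux1 huxtt1, pdx_sub_const_mul hux1 huxtt1, hxtt]
    ring
end

section
/- Let τ > 0 and a ∈ ℝ, and let A be the real 5×5 matrix ![![a, 0, 0, 0, −1], ![0, −1/τ, 0, 1/τ, 0], ![0, 0, −1/τ, 0, 0], ![0, 1/τ, 0, 0, 0], ![−1/τ, 0, 0, 0, 0]]. Set λ₁ = −(1+√5)/(2τ), λ₂ = −1/τ, λ₃ = (−1+√5)/(2τ), λ₄ = (a − √(a² + 4/τ))/2, λ₅ = (a + √(a² + 4/τ))/2, and v₁ = (0, τλ₁, 0, 1, 0), v₂ = (0, 0, 1, 0, 0), v₃ = (0, τλ₃, 0, 1, 0), v₄ = (−τλ₄,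 0, 0, 0, 1), v₅ = (−τλ₅, 0, 0, 0, 1). Then A vᵢ = λᵢ vᵢ for i = 1, …, 5, and (v₁, …, v₅) is a basis of ℝ⁵; in particular A is diagonalizable over ℝ. -/
/-- The flux Jacobian of the proposed hyperbolic approximation of the Kawahara
equation has the five real eigenvalues `λ₁, …, λ₅` with eigenvectors
`v₁, …, v₅`, which form a basis of `ℝ⁵`; in particular it is diagonalizable
over `ℝ`. -/
theorem kawahara_hyperbolic_flux_jacobian_diagonalizable (τ a : ℝ) (hτ : 0 < τ)
    (A : Matrix (Fin 5) (Fin 5) ℝ)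
    (hA : A = !![a, 0, 0, 0, -1;
                 0, -1/τ, 0, 1/τ, 0;
                 0, 0, -1/τ, 0, 0;
                 0, 1/τ, 0, 0, 0;
                 -1/τ, 0, 0, 0, 0])
    (l : Fin 5 → ℝ)
    (hl : l = ![-(1 + Real.sqrt 5) / (2 * τ),
                -1 / τ,
                (-1 + Real.sqrt 5) / (2 * τ),
                (a - Real.sqrt (a ^ 2 + 4 / τ)) / 2,
                (a + Real.sqrt (a ^ 2 + 4 / τ)) / 2])
    (v : Fin 5 → Fin 5 → ℝ)
    (hv : v = ![![0, τ * l 0, 0, 1, 0],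
                ![0, 0, 1, 0, 0],
                ![0, τ * l 2, 0, 1, 0],
                ![-(τ * l 3), 0, 0, 0, 1],
                ![-(τ * l 4), 0, 0, 0, 1]]) :
    (∀ i : Fin 5, A.mulVec (v i) = l i • v i) ∧
      LinearIndependent ℝ v ∧
      Submodule.span ℝ (Set.range v) = ⊤ := by
  have hτ0 : τ ≠ 0 := hτ.ne'
  have h5 : Real.sqrt 5 ^ 2 = 5 := Real.sq_sqrt (by norm_num)
  have h5pos : 0 < Real.sqrt 5 := Real.sqrt_pos.2 (by norm_num)
  have hdisc : 0 < a ^ 2 + 4 / τ := by positivity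
  have hs : Real.sqrt (a ^ 2 + 4 / τ) ^ 2 = a ^ 2 + 4 / τ := Real.sq_sqrt hdisc.le
  have hspos : 0 < Real.sqrt (a ^ 2 + 4 / τ) := Real.sqrt_pos.2 hdisc
  have hl1 : l 1 = -1 / τ := by simp [hl]
  have q0 : τ * l 0 ^ 2 = -l 0 + 1 / τ := by
    have : l 0 = -(1 + Real.sqrt 5) / (2 * τ) := by simp [hl]
    rw [this]
    field_simp
    linear_combination h5
  have q2 : τ * l 2 ^ 2 = -l 2 + 1 / τ := by
    have : l 2 = (-1 + Real.sqrt 5) / (2 * τ) := by simp [hl]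
    rw [this]
    field_simp
    linear_combination h5
  have hl3 : l 3 = (a - Real.sqrt (a ^ 2 + 4 / τ)) / 2 := by simp [hl]
  have hl4 : l 4 = (a + Real.sqrt (a ^ 2 + 4 / τ)) / 2 := by simp [hl]
  have hτinv : τ * (4 / τ) = 4 := by field_simp
  have q3 : τ * l 3 ^ 2 = a * (τ * l 3) + 1 := by
    rw [hl3]
    linear_combination τ / 4 * hs + hτinv / 4
  have q4 : τ * l 4 ^ 2 = a * (τ * l 4) + 1 := by
    rw [hl4]
    linear_combination τ / 4 * hs + hτinv / 4
  have d02 : τ * l 2 - τ * l 0 ≠ 0 := by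
    have : τ * l 2 - τ * l 0 = Real.sqrt 5 := by
      simp only [hl, Matrix.cons_val]
      field_simp
      ring
    exact this ▸ h5pos.ne'
  have d34 : τ * l 4 - τ * l 3 ≠ 0 := by
    have : τ * l 4 - τ * l 3 = τ * Real.sqrt (a ^ 2 + 4 / τ) := by
      rw [hl3, hl4]
      ring
    exact this ▸ (mul_pos hτ hspos).ne'
  have hli : LinearIndependent ℝ v := by
    rw [Fintype.linearIndependent_iff]
    intro g hg
    have e (j : Fin 5) := congrFun hg j
    have e0 := e 0
    have e1 := e 1
    have e2 := e 2
    have e3 := e 3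
    have e4 := e 4
    simp [hv, Fin.sum_univ_five] at e0 e1 e2 e3 e4
    have g2 : g 2 = 0 := by
      refine (mul_eq_zero.1 ?_).resolve_right d02
      linear_combination e1 - τ * l 0 * e3
    have g4 : g 4 = 0 := by
      refine (mul_eq_zero.1 ?_).resolve_right d34
      linear_combination -e0 - τ * l 3 * e4
    have g0 : g 0 = 0 := by linear_combination e3 - g2
    have g3 : g 3 = 0 := by linear_combination e4 - g4
    intro i
    fin_cases i <;> assumption
  refine ⟨?_, hli, hli.span_eq_top_of_card_eq_finrank (by simp)⟩
  have heig1 (t : ℝ) (ht : τ * t ^ 2 = -t + 1 / τ) :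
      A.mulVec ![0, τ * t, 0, 1, 0] = t • ![0, τ * t, 0, 1, 0] := by
    ext j
    fin_cases j <;> simp [hA, Matrix.mulVec, dotProduct, Fin.sum_univ_five]
    · field_simp at ht ⊢
      linear_combination -ht
    · field_simp
  have heig2 (t : ℝ) (ht : τ * t ^ 2 = a * (τ * t) + 1) :
      A.mulVec ![-(τ * t), 0, 0, 0, 1] = t • ![-(τ * t), 0, 0, 0, 1] := by
    ext j
    fin_cases j <;> simp [hA, Matrix.mulVec, dotProduct, Fin.sum_univ_five]
    · linear_combination ht
    · field_simp
  intro i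
  fin_cases i
  · simpa [hv] using heig1 (l 0) q0
  · ext j
    fin_cases j <;> simp [hv, hA, hl1, Matrix.mulVec, dotProduct, Fin.sum_univ_five]
  · simpa [hv] using heig1 (l 2) q2
  · simpa [hv] using heig2 (l 3) q3
  · simpa [hv] using heig2 (l 4) q4
end
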